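/- Let n and k be natural numbers with k ≤ n. If y is drawn uniformly at random from the set Fact(n) of n-factoradics, then A_k(y) is distributed uniformly at random over the set of n-bit strings of Hamming weight k; that is, the pushforward of the uniform probability distribution on Fact(n) under A_k is the uniform probability distribution on the C(n,k) bit strings of length n with exactly k ones. -/

import Mathlib

/-- An `n`-factoradic: a sequence `(y_{n-1}, …, y_0)` with `0 ≤ y_j ≤ j`, modeled as a
dependent function assigning to each `j : Fin n` an element of `Fin (j+1)`. -/
def Factoradic (n : ℕ) : Type := ∀ j : Fin n, Fin (j.val + 1)

instance (n : ℕ) : Fintype (Factoradic n) := by unfold Factoradic; infer_instance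
instance (n : ℕ) : DecidableEq (Factoradic n) := by unfold Factoradic; infer_instance
instance (n : ℕ) : Nonempty (Factoradic n) := by unfold Factoradic; infer_instance

/-- The value `y_j` of a factoradic at position `j` (and `0` for out-of-range `j`). -/
def factVal {n : ℕ} (y : Factoradic n) (j : ℕ) : ℕ :=
  if h : j < n then (y ⟨j, h⟩).val else 0

/-- `akWeight k n y t` is the number of ones among the first `t` produced bits of the
string `A_k(y)`, i.e. among the bits at positions `n−1, n−2, …, n−t` (produced from
left to right).  At step `t` the bit produced (at position `n−1−t`) is `1` iff
`y (n−1−t) < k − (current weight)`. -/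
def akWeight (k n : ℕ) (y : ℕ → ℕ) : ℕ → ℕ
  | 0 => 0
  | t + 1 =>
    akWeight k n y t + (if y (n - 1 - t) < k - akWeight k n y t then 1 else 0)

/-- The bit of `A_k(y)` at position `p` (for `p < n`): letting `H_p = akWeight k n y (n−1−p)`
be the number of ones among the already-produced bits at positions `> p`, the bit is `1`
iff `y p < k − H_p`. -/
def akBit (k n : ℕ) (y : ℕ → ℕ) (p : ℕ) : Bool :=
  decide (y p < k - akWeight k n y (n - 1 - p))

/-- The `n`-bit string `A_k(y)` produced from an `n`-factoradic `y`. -/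
def ak (n k : ℕ) (y : Factoradic n) : Fin n → Bool :=
  fun p => akBit k n (factVal y) p.val

/-!
The leading digit `a = y_n` of an `(n+1)`-factoradic decides the leading bit of `A_k(y)`, which is
`1` iff `a < k`; the remaining bits are `A_{k'}` of the remaining digits, where `k'` is `k` minus
the leading bit. A string of length `n + 1` and weight `k` with leading bit `1` thus has `k` choices
for `a`, and one with leading bit `0` has `n + 1 - k`. Multiplying over all positions, every
string of weight `k` has exactly `k! (n - k)!` preimages, out of `n!` factoradics.
-/

open Finset
open scoped Nat ENNReal

lemma map_uniformOfFintype_apply {α β : Type*} [Fintype α] [Nonempty α] [DecidableEq β]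
    (f : α → β) (b : β) :
    PMF.map f (PMF.uniformOfFintype α) b = (#{a | f a = b} : ℝ≥0∞) / Fintype.card α := by
  simp [PMF.map_apply, tsum_fintype, ← sum_filter, div_eq_mul_inv, eq_comm]

lemma card_filter_decide_val_lt_eq (m k : ℕ) (b : Bool) :
    #{a : Fin m | decide (a.val < k) = b} = bif b then min m k else m - k := by
  have card_lt : #{a : Fin m | a.val < k} = min m k := Fin.card_filter_val_lt
  have card_add := card_filter_add_card_filter_not (s := (univ : Finset (Fin m))) (·.val < k)
  rw [card_univ, Fintype.card_fin] at card_add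
  cases b
  · simp only [decide_eq_false_iff_not, cond_false]
    omega
  · simpa only [decide_eq_true_eq, cond_true] using card_lt

lemma hammingNorm_eq_card_filter_eq_true {ι : Type*} [Fintype ι] (s : ι → Bool) :
    hammingNorm s = #{i | s i = true} :=
  congrArg card (filter_congr fun _ _ => Bool.ne_false_iff)

lemma hammingNorm_snoc {n : ℕ} (s : Fin n → Bool) (b : Bool) :
    hammingNorm (Fin.snoc s b : Fin (n + 1) → Bool) = hammingNorm s + b.toNat := by
  simp only [hammingNorm_eq_card_filter_eq_true, card_filter, Fin.sum_univ_castSucc,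
    Fin.snoc_castSucc, Fin.snoc_last]
  cases b <;> rfl

/-- Adjoining a leading digit `y_n` to an `n`-factoradic. As positions are indexed from the least
significant one, the leading digit is the last entry of the tuple. -/
def Factoradic.snocEquiv (n : ℕ) : Fin (n + 1) × Factoradic n ≃ Factoradic (n + 1) :=
  Fin.snocEquiv fun j : Fin (n + 1) => Fin (j.val + 1)

lemma Factoradic.card (n : ℕ) : Fintype.card (Factoradic n) = n ! := by
  induction n with
  | zero => rfl
  | succ n ih =>
    rw [← Fintype.card_congr (snocEquiv n), Fintype.card_prod, Fintype.card_fin, ih,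
      Nat.factorial_succ]

section snocEquiv

variable {n : ℕ} (a : Fin (n + 1)) (y : Factoradic n)

lemma factVal_snocEquiv_self : factVal (Factoradic.snocEquiv n (a, y)) n = a := by
  rw [factVal, dif_pos n.lt_succ_self]
  exact congrArg Fin.val (Fin.snoc_last (α := fun j : Fin (n + 1) => Fin (j.val + 1)) a y)

lemma factVal_snocEquiv_of_lt {j : ℕ} (hj : j < n) :
    factVal (Factoradic.snocEquiv n (a, y)) j = factVal y j := by
  rw [factVal, factVal, dif_pos (hj.trans n.lt_succ_self), dif_pos hj]
  exact congrArg Fin.val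
    (Fin.snoc_castSucc (α := fun j : Fin (n + 1) => Fin (j.val + 1)) a y ⟨j, hj⟩)

end snocEquiv

lemma akWeight_congr (k : ℕ) {n t : ℕ} {y z : ℕ → ℕ} (hyz : ∀ j < n, y j = z j) (ht : t ≤ n) :
    akWeight k n y t = akWeight k n z t := by
  induction t with
  | zero => rfl
  | succ t ih => rw [akWeight, akWeight, ih (by omega), hyz _ (by omega)]

lemma akWeight_succ_succ (k n : ℕ) (y : ℕ → ℕ) (t : ℕ) :
    akWeight k (n + 1) y (t + 1) =
      (decide (y n < k)).toNat + akWeight (k - (decide (y n < k)).toNat) n y t := by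
  induction t with
  | zero => simp [akWeight, Bool.toNat, Bool.cond_decide]
  | succ t ih =>
    have position_eq : n + 1 - 1 - (t + 1) = n - 1 - t := by omega
    rw [akWeight, ih, akWeight, position_eq, Nat.sub_sub k, add_assoc]

lemma ak_snocEquiv {n : ℕ} (k : ℕ) (a : Fin (n + 1)) (y : Factoradic n) :
    ak (n + 1) k (Factoradic.snocEquiv n (a, y)) =
      Fin.snoc (ak n (k - (decide (a.val < k)).toNat) y) (decide (a.val < k)) := by
  funext p
  induction p using Fin.lastCases with
  | last => simp [ak, akBit, akWeight, factVal_snocEquiv_self]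
  | cast p =>
    have steps_eq : n + 1 - 1 - p.val = (n - 1 - p.val) + 1 := by omega
    have weight_eq (k' : ℕ) :
        akWeight k' n (factVal (Factoradic.snocEquiv n (a, y))) (n - 1 - p) =
          akWeight k' n (factVal y) (n - 1 - p) :=
      akWeight_congr k' (fun _ hj => factVal_snocEquiv_of_lt a y hj) (by omega)
    simp only [ak, akBit, Fin.snoc_castSucc, Fin.val_castSucc, steps_eq, akWeight_succ_succ,
      factVal_snocEquiv_self, factVal_snocEquiv_of_lt a y p.isLt, weight_eq, Nat.sub_sub k]

lemma hammingNorm_ak (n k : ℕ) (y : Factoradic n) : hammingNorm (ak n k y) = min n k := by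
  induction n generalizing k with
  | zero => simpa using hammingNorm_le_card_fintype (x := ak 0 k y)
  | succ n ih =>
    obtain ⟨⟨a, y⟩, rfl⟩ := (Factoradic.snocEquiv n).surjective y
    rw [ak_snocEquiv, hammingNorm_snoc, ih]
    by_cases ha : a.val < k
    · simp only [ha, decide_true, Bool.toNat_true]
      omega
    · simp only [ha, decide_false, Bool.toNat_false]
      omega

lemma card_ak_eq_snoc {n : ℕ} (k : ℕ) (s : Fin n → Bool) (b : Bool) :
    #{y | ak (n + 1) k y = Fin.snoc s b} =
      #{a : Fin (n + 1) | decide (a.val < k) = b} * #{y | ak n (k - b.toNat) y = s} := by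
  rw [← card_product]
  refine (card_equiv (Factoradic.snocEquiv n) ?_).symm
  rintro ⟨a, y⟩
  simp only [mem_product, mem_filter_univ, ak_snocEquiv, Fin.snoc_inj]
  constructor
  · rintro ⟨rfl, rfl⟩
    exact ⟨rfl, rfl⟩
  · rintro ⟨rfl, rfl⟩
    exact ⟨rfl, rfl⟩

lemma card_ak_hammingNorm_eq {n : ℕ} (s : Fin n → Bool) :
    #{y | ak n (hammingNorm s) y = s} = (hammingNorm s)! * (n - hammingNorm s)! := by
  induction s using Fin.snocInduction with
  | elim0 => rfl
  | @snoc n s b ih =>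
    have weight_le : hammingNorm s ≤ n :=
      hammingNorm_le_card_fintype.trans_eq (Fintype.card_fin n)
    rw [card_ak_eq_snoc, card_filter_decide_val_lt_eq, hammingNorm_snoc, Nat.add_sub_cancel, ih]
    cases b
    · simp only [cond_false, Bool.toNat_false, add_zero]
      rw [Nat.sub_add_comm weight_le, Nat.factorial_succ]
      ring
    · simp only [cond_true, Bool.toNat_true]
      rw [min_eq_right (by omega), Nat.add_sub_add_right, Nat.factorial_succ, mul_assoc]

lemma factorial_mul_factorial_div_factorial_eq_one_div_choose {n k : ℕ} (hkn : k ≤ n) :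
    ((k ! * (n - k)! : ℕ) : ℝ≥0∞) / (n ! : ℕ) = 1 / n.choose k := by
  rw [ENNReal.div_eq_div_iff (by simp [Nat.choose_eq_zero_iff, hkn]) (by simp)
    (by simp [Nat.factorial_ne_zero]) (by simp),
    mul_one, ← Nat.cast_mul, ← mul_assoc, Nat.choose_mul_factorial_mul_factorial hkn]

/-- For `k ≤ n`, if `y` is drawn uniformly at random from the `n`-factoradics, then
`A_k(y)` is uniformly distributed over the `n`-bit strings of Hamming weight `k`:
the pushforward of the uniform distribution on `Fact(n)` under `A_k` assigns
probability `1 / C(n,k)` to every weight-`k` string and `0` to every other string. -/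
theorem ak_pushforward_uniform (n k : ℕ) (hkn : k ≤ n) (s : Fin n → Bool) :
    (PMF.map (ak n k) (PMF.uniformOfFintype (Factoradic n))) s =
      if (Finset.univ.filter (fun p => s p = true)).card = k then
        (1 : ENNReal) / (Nat.choose n k) else 0 := by
  rw [← hammingNorm_eq_card_filter_eq_true, map_uniformOfFintype_apply, Factoradic.card]
  split_ifs with hs
  · subst hs
    rw [card_ak_hammingNorm_eq, factorial_mul_factorial_div_factorial_eq_one_div_choose hkn]
  · have fiber_empty : #{y | ak n k y = s} = 0 := by
      refine card_filter_eq_zero_iff.2 fun y _ hy => hs ?_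
      rw [← hy, hammingNorm_ak, min_eq_right hkn]
    rw [fiber_empty, Nat.cast_zero, ENNReal.zero_div]
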